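/- arXiv:1111.5856 — 2 statements merged into one kernel-verified Lean document; each statement's English description precedes it below -/
import Mathlib

section
/- Let n, m, r be positive integers with m ≤ r, and let P be an r × m matrix with entries in the polynomial ring ℂ[x₁,…,xₙ] such that there exist positive integers d₁,…,d_r for which every entry in the i-th row of P is homogeneous of degree dᵢ. Let I be the ideal of ℂ[x₁,…,xₙ] generated by the determinants of all m × m submatrices of P obtained by selecting m of the r rows. Then the height of I is at most r − m + 1. (Equivalently: the characteristic variety {ξ ∈ ℙ^ℂT* : rank P(ξ) < m} of a system of r differential equations on m unknown functions has codimension at most r − m + 1.) -/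
/-- The height of an ideal: the infimum of the heights (in the prime spectrum,
ordered by inclusion) of the prime ideals containing it. -/
noncomputable def idealHeight {R : Type*} [CommRing R] (I : Ideal R) : ℕ∞ :=
  ⨅ p ∈ {p : PrimeSpectrum R | I ≤ p.asIdeal}, Order.height p

/-- The ideal of maximal minors of an `r × m` matrix `P`: generated by the
determinants of all `m × m` row-submatrices of `P`. -/
def maximalMinorsIdeal {R : Type*} [CommRing R] {r m : ℕ}
    (P : Matrix (Fin r) (Fin m) R) : Ideal R :=
  Ideal.span { d : R | ∃ f : Fin m → Fin r, StrictMono f ∧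
    d = Matrix.det (Matrix.of fun i j => P (f i) j) }

/-- Minors along arbitrary (not only strictly increasing) row selections already generate the ideal
of maximal minors. -/
theorem maximalMinorsIdeal_eq_span_range {R : Type*} [CommRing R] {r m : ℕ}
    (M : Matrix (Fin r) (Fin m) R) :
    maximalMinorsIdeal M =
      Ideal.span (Set.range fun f : Fin m → Fin r => (M.submatrix f id).det) := by
  apply le_antisymm
  · refine Ideal.span_mono ?_
    rintro _ ⟨f, -, rfl⟩
    exact ⟨f, rfl⟩
  · rw [Ideal.span_le]
    rintro _ ⟨f, rfl⟩
    by_cases hf : Function.Injective f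
    · have hmem : ((M.submatrix f id).submatrix (Tuple.sort f) id).det ∈ maximalMinorsIdeal M :=
        Ideal.subset_span ⟨f ∘ Tuple.sort f,
          (Tuple.monotone_sort f).strictMono_of_injective (hf.comp (Tuple.sort f).injective), rfl⟩
      rw [Matrix.det_permute] at hmem
      refine (Ideal.unit_mul_mem_iff_mem _ ?_).mp hmem
      exact (Units.isUnit _).map (Int.castRingHom R)
    · obtain ⟨a, b, hab, hne⟩ := Function.not_injective_iff.mp hf
      have hzero : (M.submatrix f id).det = 0 :=
        Matrix.det_zero_of_row_eq hne (by ext j; simp [Matrix.submatrix, hab])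
      simp [hzero]

theorem det_submatrix_mem_maximalMinorsIdeal {R : Type*} [CommRing R] {r m : ℕ}
    (M : Matrix (Fin r) (Fin m) R) (f : Fin m → Fin r) :
    (M.submatrix f id).det ∈ maximalMinorsIdeal M := by
  rw [maximalMinorsIdeal_eq_span_range]
  exact Ideal.subset_span ⟨f, rfl⟩

theorem maximalMinorsIdeal_le_iff {R : Type*} [CommRing R] {r m : ℕ}
    {M : Matrix (Fin r) (Fin m) R} {J : Ideal R} :
    maximalMinorsIdeal M ≤ J ↔ ∀ f : Fin m → Fin r, (M.submatrix f id).det ∈ J := by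
  rw [maximalMinorsIdeal_eq_span_range, Ideal.span_le, Set.range_subset_iff]
  rfl

theorem maximalMinorsIdeal_map {R S : Type*} [CommRing R] [CommRing S] {r m : ℕ}
    (M : Matrix (Fin r) (Fin m) R) (φ : R →+* S) :
    maximalMinorsIdeal (M.map φ) = (maximalMinorsIdeal M).map φ := by
  rw [maximalMinorsIdeal_eq_span_range, maximalMinorsIdeal_eq_span_range, Ideal.map_span,
    ← Set.range_comp]
  congr 2
  ext f
  rw [Function.comp_apply, RingHom.map_det, RingHom.mapMatrix_apply, Matrix.submatrix_map]

/-- Clearing the pivot row by column operations, a matrix with a unit entry has the same ideal of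
maximal minors as a matrix with one row and one column less. -/
theorem exists_maximalMinorsIdeal_eq_of_isUnit {R : Type*} [CommRing R] {r m : ℕ}
    (M : Matrix (Fin (r + 1)) (Fin (m + 1)) R) {i : Fin (r + 1)} {j : Fin (m + 1)}
    (h : IsUnit (M i j)) :
    ∃ N : Matrix (Fin r) (Fin m) R, maximalMinorsIdeal M = maximalMinorsIdeal N := by
  classical
  obtain ⟨u, hu⟩ := h
  let c : Fin (m + 1) → R := fun l => if l = j then 0 else -(M i l * ↑u⁻¹)
  let L : Matrix (Fin (r + 1)) (Fin (m + 1)) R := Matrix.of fun k l => M k l + c l * M k j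
  have hdet (f : Fin (m + 1) → Fin (r + 1)) :
      (L.submatrix f id).det = (M.submatrix f id).det := by
    rw [← Matrix.det_transpose, ← Matrix.det_transpose (M.submatrix f id)]
    exact Matrix.det_eq_of_forall_row_eq_smul_add_const c j (by simp [c]) fun _ _ => rfl
  have hLj (k) : L k j = M k j := by simp [L, c]
  have hLi {l} (hl : l ≠ j) : L i l = 0 := by
    simp [L, c, hl, ← hu, mul_assoc]
  refine ⟨L.submatrix i.succAbove j.succAbove, le_antisymm ?_ ?_⟩
  · rw [maximalMinorsIdeal_le_iff]
    intro f
    rw [← hdet, Matrix.det_succ_column _ j]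
    refine Ideal.sum_mem _ fun k _ => Ideal.mul_mem_left _ _ ?_
    by_cases hf : ∃ k', f (k.succAbove k') = i
    · obtain ⟨k', hk'⟩ := hf
      rw [Matrix.det_eq_zero_of_row_eq_zero k' fun l => by
        simpa [hk'] using hLi (Fin.succAbove_ne j l)]
      exact Ideal.zero_mem _
    · push Not at hf
      choose g hg using fun k' => Fin.exists_succAbove_eq (hf k')
      convert! det_submatrix_mem_maximalMinorsIdeal (L.submatrix i.succAbove j.succAbove) g using 2
      ext k' l
      simp [hg]
  · rw [maximalMinorsIdeal_le_iff]
    intro g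
    have hmem := det_submatrix_mem_maximalMinorsIdeal M (Fin.cons i fun k => i.succAbove (g k))
    rw [← hdet, Matrix.det_succ_row _ 0, Finset.sum_eq_single j] at hmem
    · have hunit : IsUnit ((-1 : R) ^ ((0 : Fin (m + 1)) + j : ℕ) *
          (L.submatrix (Fin.cons i fun k => i.succAbove (g k)) id) 0 j) := by
        refine (isUnit_one.neg.pow _).mul ?_
        simp [hLj, ← hu]
      exact (Ideal.unit_mul_mem_iff_mem _ hunit).mp hmem
    · intro l _ hl
      simp [hLi hl]
    · simp

theorem Ideal.height_le_height_map_C {R : Type*} [CommRing R] [IsNoetherianRing R]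
    (p : Ideal R) [p.IsPrime] : p.height ≤ (p.map Polynomial.C).height := by
  have : (p.map Polynomial.C).LiesOver p := ⟨by
    ext x
    change _ ↔ Polynomial.C x ∈ p.map Polynomial.C
    rw [Ideal.mem_map_C_iff]
    refine ⟨fun hx n => ?_, fun hx => by simpa using hx 0⟩
    rw [Polynomial.coeff_C]
    split_ifs
    exacts [hx, p.zero_mem]⟩
  rw [Ideal.height_eq_height_add_of_liesOver_of_hasGoingDown p (p.map Polynomial.C)]
  exact le_self_add

/-- If `p` is a minimal prime of the maximal minors of `M`, and all entries of `M` are in `p`,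
then after adding an indeterminate to one entry, the extension of `p` is still a minimal prime of
the maximal minors, provided there are at least two columns. -/
theorem map_C_mem_minimalPrimes_maximalMinorsIdeal {R : Type*} [CommRing R] [IsNoetherianRing R]
    {r m : ℕ} (M : Matrix (Fin r) (Fin (m + 2)) R) {p : Ideal R}
    (hp : p ∈ (maximalMinorsIdeal M).minimalPrimes) (hM : ∀ i j, M i j ∈ p) (i : Fin r) :
    p.map Polynomial.C ∈
      (maximalMinorsIdeal (M.map Polynomial.C + Matrix.single i 0 Polynomial.X)).minimalPrimes := by
  have hprime : p.IsPrime := hp.isPrime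
  set N := M.map Polynomial.C + Matrix.single i 0 Polynomial.X
  have hNM : N.map Polynomial.constantCoeff = M := by
    ext k l
    by_cases h : i = k ∧ 0 = l <;> simp [N, h]
  refine ⟨⟨inferInstance, ?_⟩, fun Q ⟨hQ, hNQ⟩ hQp => ?_⟩
  · rw [maximalMinorsIdeal_le_iff]
    intro f
    rw [Matrix.det_succ_column _ 1]
    refine Ideal.sum_mem _ fun k _ => Ideal.mul_mem_right _ _ (Ideal.mul_mem_left _ _ ?_)
    simpa [N] using Ideal.mem_map_of_mem Polynomial.C (hM (f k) 1)
  let q := p.comap (Polynomial.constantCoeff (R := R))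
  have hpq : p.map Polynomial.C < q := by
    refine lt_of_le_of_ne (Ideal.map_le_iff_le_comap.mpr fun x hx => by simpa [q] using hx) ?_
    intro heq
    have hX : (Polynomial.X : Polynomial R) ∈ p.map Polynomial.C := by
      rw [heq]
      simp [q]
    rw [Ideal.mem_map_C_iff] at hX
    exact hprime.ne_top (p.eq_top_iff_one.mpr (by simpa using hX 1))
  have hq : q ∈ (Ideal.span (insert Polynomial.X (Q : Set (Polynomial R)))).minimalPrimes := by
    refine ⟨⟨inferInstance, ?_⟩, fun q' ⟨hq', hle⟩ hq'q => ?_⟩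
    · rw [Ideal.span_le, Set.insert_subset_iff]
      exact ⟨by simp [q], hQp.trans hpq.le⟩
    rw [Ideal.span_le, Set.insert_subset_iff] at hle
    have hdecomp (g : Polynomial R) : g ∈ q' ↔ Polynomial.C (g.coeff 0) ∈ q' := by
      conv_lhs => rw [← g.divX_mul_X_add]
      exact q'.add_mem_iff_right (Ideal.mul_mem_left _ _ hle.1)
    have hpq' : p ≤ q'.comap Polynomial.C := by
      refine hp.2 ⟨inferInstance, ?_⟩ fun x hx => by simpa [q] using hq'q hx
      rw [← hNM, maximalMinorsIdeal_map, Ideal.map_le_iff_le_comap]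
      intro g hg
      exact (hdecomp g).mp (hle.2 (hNQ hg))
    intro g hg
    exact (hdecomp g).mpr (hpq' hg)
  have := Ideal.mem_minimalPrimes_span_of_mem_minimalPrimes_span_insert hpq _ _ hq _ hQp
    fun x hx => Ideal.le_radical (Ideal.subset_span (Set.mem_insert_of_mem _ hx))
  rw [Ideal.span_eq] at this
  exact this.2 ⟨hQ, le_rfl⟩ hQp

/-- **Eagon–Northcott bound**: in a Noetherian ring, a minimal prime of the ideal of maximal minors
of an `r × (m + 1)` matrix has height at most `r - m`. -/
theorem height_le_of_mem_minimalPrimes_maximalMinorsIdeal {R : Type*} [CommRing R]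
    [IsNoetherianRing R] {r m : ℕ} (M : Matrix (Fin r) (Fin (m + 1)) R) {p : Ideal R}
    (hp : p ∈ (maximalMinorsIdeal M).minimalPrimes) : p.height ≤ (r - m : ℕ) := by
  induction m generalizing R r with
  | zero =>
    rw [maximalMinorsIdeal_eq_span_range] at hp
    refine (Ideal.height_le_card_of_mem_minimalPrimes_span (Set.finite_range _) hp).trans ?_
    norm_cast
    rw [← Set.image_univ]
    refine (Set.ncard_image_le Set.finite_univ).trans ?_
    simp [Set.ncard_univ]
  | succ m ih =>
    obtain _ | r := r
    · have hbot : maximalMinorsIdeal M = ⊥ := by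
        rw [eq_bot_iff, maximalMinorsIdeal_le_iff]
        exact fun f => (f 0).elim0
      have := hp.isPrime
      rw [hbot] at hp
      simp [Ideal.height_eq_zero_iff.mpr hp]
    have pivot {A : Type _} [CommRing A] [IsNoetherianRing A]
        (N : Matrix (Fin (r + 1)) (Fin (m + 1 + 1)) A) {q : Ideal A}
        (hq : q ∈ (maximalMinorsIdeal N).minimalPrimes) {i j} (hij : N i j ∉ q) :
        q.height ≤ (r + 1 - (m + 1) : ℕ) := by
      have := hq.isPrime
      let S := Localization.AtPrime q
      obtain ⟨N', hN'⟩ := exists_maximalMinorsIdeal_eq_of_isUnit (N.map (algebraMap A S))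
        (i := i) (j := j) (IsLocalization.map_units S (⟨N i j, hij⟩ : q.primeCompl))
      rw [← Localization.AtPrime.under_maximalIdeal (I := q)] at hq ⊢
      rw [IsLocalization.height_under q.primeCompl]
      rw [← Set.mem_preimage, ← IsLocalization.minimalPrimes_map q.primeCompl,
        ← maximalMinorsIdeal_map, hN'] at hq
      simpa using ih N' hq
    by_cases hM : ∀ i j, M i j ∈ p
    · have := hp.isPrime
      refine p.height_le_height_map_C.trans
        (pivot _ (map_C_mem_minimalPrimes_maximalMinorsIdeal M hp hM 0) (i := 0) (j := 0) ?_)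
      intro h
      rw [Ideal.mem_map_C_iff] at h
      exact hp.isPrime.ne_top (p.eq_top_iff_one.mpr (by simpa using h 1))
    · push Not at hM
      obtain ⟨i, j, hij⟩ := hM
      exact pivot M hp hij

/-- The characteristic variety of a system of `r` differential equations on `m`
unknown functions (in `n` independent variables) has codimension at most
`r - m + 1`: if every entry of the `i`-th row of the symbol matrix `P` is
homogeneous of degree `dᵢ > 0`, then the ideal of maximal minors of `P` has
height at most `r - m + 1`. -/
theorem height_maximalMinors_le (n m r : ℕ) (hn : 0 < n) (hm : 0 < m) (hr : 0 < r)
    (hmr : m ≤ r) (P : Matrix (Fin r) (Fin m) (MvPolynomial (Fin n) ℂ))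
    (d : Fin r → ℕ) (hd : ∀ i, 0 < d i)
    (hhom : ∀ i j, (P i j).IsHomogeneous (d i)) :
    idealHeight (maximalMinorsIdeal P) ≤ (r - m + 1 : ℕ) := by
  obtain ⟨m, rfl⟩ := Nat.exists_eq_add_of_le' hm
  have hle : maximalMinorsIdeal P ≤ RingHom.ker (MvPolynomial.constantCoeff (R := ℂ)) := by
    rw [← Ideal.map_eq_bot_iff_le_ker, ← maximalMinorsIdeal_map, eq_bot_iff,
      maximalMinorsIdeal_le_iff]
    intro f
    have hzero : P.map MvPolynomial.constantCoeff = 0 := by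
      ext i j
      exact (hhom i j).coeff_eq_zero (by simpa using (hd i).ne)
    simp [hzero]
  have := RingHom.ker_isPrime (MvPolynomial.constantCoeff (R := ℂ) (σ := Fin n))
  obtain ⟨p, hp, -⟩ := Ideal.exists_minimalPrimes_le hle
  have hheight := height_le_of_mem_minimalPrimes_maximalMinorsIdeal P hp
  refine (iInf₂_le (⟨p, hp.isPrime⟩ : PrimeSpectrum _) hp.le).trans ?_
  rw [← PrimeSpectrum.height_eq_orderHeight]
  exact hheight.trans (by norm_cast; omega)
end

section
/- Let n ≥ 1 and m ≥ 2. Let P, Q, K be m × m matrices with entries in the polynomial ring ℂ[x₁,…,xₙ] such that every entry of P is homogeneous of a common positive degree a, every entry of Q is homogeneous of a common positive degree b, and P·Q = K·P. Let I be the ideal of ℂ[x₁,…,xₙ] generated by the determinants of all m × m submatrices of the (2m) × m block matrix obtained by stacking P on top of Q. Then the height of I is at most m. (Equivalently: the characteristic variety {ξ : rank [P(ξ); Q(ξ)] < m} of the joint system of a determined PDE and its symmetry has codimension at most m.) -/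
open Matrix

/-- Every prime of a subring of a field is the center of a valuation ring of the field. -/
lemma exists_valuationSubring_center_eq {S L : Type*} [CommRing S] [Field L]
    (g : S →+* L) (hg : Function.Injective g) (q : Ideal S) [q.IsPrime] :
    ∃ V : ValuationSubring L, ∀ s, V.valuation (g s) ≤ 1 ∧
      (V.valuation (g s) < 1 ↔ s ∈ q) := by
  have hunit (y : q.primeCompl) : IsUnit (g y) := by
    refine IsUnit.mk0 _ fun h => y.2 ?_
    rw [(map_eq_zero_iff g hg).mp h]
    exact q.zero_mem
  obtain ⟨V, hV, hloc⟩ :=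
    IsLocalRing.exists_factor_valuationRing (IsLocalization.lift (S := Localization.AtPrime q) hunit)
  have hmem (s : S) : g s ∈ V := by simpa using hV (algebraMap S _ s)
  refine ⟨V, fun s => ⟨(V.valuation_le_one_iff _).mpr (hmem s), ?_⟩⟩
  have h1 := V.valuation_lt_one_iff ⟨g s, hmem s⟩
  have h2 : (⟨g s, hmem s⟩ : V) = RingHom.codRestrict
      (IsLocalization.lift (S := Localization.AtPrime q) hunit) V.toSubring hV
      (algebraMap S _ s) := Subtype.ext (by simp)
  rw [← h1, IsLocalRing.mem_maximalIdeal, mem_nonunits_iff, h2,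
    isUnit_map_iff, IsLocalization.AtPrime.isUnit_to_map_iff _ q]
  simp [Ideal.primeCompl]

/-- If `N` has integral entries and moves the nonzero vector `w` only a little, in the sense that
`N w` is smaller than `w`, then `det N` is not a unit. -/
lemma Valuation.map_det_lt_one_of_mulVec {L Γ ι : Type*} [Field L]
    [LinearOrderedCommGroupWithZero Γ] [Fintype ι] [DecidableEq ι] (v : Valuation L Γ)
    (N : Matrix ι ι L) (hN : ∀ i j, v (N i j) ≤ 1) (w : ι → L) (hw : w ≠ 0) (μ : L)
    (hμ : v μ < 1) (h : ∀ i, ∃ k, v ((N *ᵥ w) i) ≤ v (μ * w k)) : v N.det < 1 := by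
  obtain ⟨i₀, hi₀⟩ := Function.ne_iff.mp hw
  have : Nonempty ι := ⟨i₀⟩
  obtain ⟨j, hj⟩ := Finite.exists_max fun i => v (w i)
  have hwj : 0 < v (w j) :=
    lt_of_lt_of_le (zero_lt_iff.mpr ((v.ne_zero_iff).mpr hi₀)) (hj i₀)
  have hadj (i k) : v (N.adjugate i k) ≤ 1 := by
    let M : Matrix ι ι v.integer := Matrix.of fun i j => ⟨N i j, hN i j⟩
    have : N = v.integer.subtype.mapMatrix M := by ext; rfl
    rw [this, ← RingHom.map_adjugate]
    exact (M.adjugate i k).2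
  have hdet : N.det * w j = ∑ k, N.adjugate j k * (N *ᵥ w) k := by
    have := congrFun (congrArg (· *ᵥ w) N.adjugate_mul) j
    simp only [← Matrix.mulVec_mulVec, Matrix.smul_mulVec, Matrix.one_mulVec, Pi.smul_apply,
      smul_eq_mul] at this
    rw [← this]; rfl
  have hlt : v (N.det * w j) < v (w j) := by
    rw [hdet]
    refine v.map_sum_lt' hwj fun k _ => ?_
    obtain ⟨l, hl⟩ := h k
    rw [map_mul]
    calc v (N.adjugate j k) * v ((N *ᵥ w) k) ≤ 1 * (v μ * v (w j)) := by
          gcongr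
          · exact hadj j k
          · exact hl.trans (by rw [map_mul]; gcongr; exact hj l)
      _ < v (w j) := by
          rw [one_mul]; exact mul_lt_of_lt_one_left hwj hμ
  rw [map_mul] at hlt
  by_contra hcon
  exact absurd hlt (not_lt.mpr (le_mul_of_one_le_left' (not_lt.mp hcon)))

/-- If `P Q = K P` and `P` is singular, then `Q` has an eigenvector in the kernel of `P`. -/
lemma Matrix.exists_eigenvector_of_mul_eq_mul {L ι : Type*} [Field L] [IsAlgClosed L]
    [Fintype ι] [DecidableEq ι] {P Q K : Matrix ι ι L} (h : P * Q = K * P) (hP : P.det = 0) :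
    ∃ (μ : L) (w : ι → L), w ≠ 0 ∧ P *ᵥ w = 0 ∧ Q *ᵥ w = μ • w := by
  obtain ⟨u, hu, hPu⟩ := Matrix.exists_mulVec_eq_zero_iff.mpr hP
  have hinv : ∀ x ∈ LinearMap.ker P.mulVecLin, Q.mulVecLin x ∈ LinearMap.ker P.mulVecLin := by
    intro x hx
    simp only [LinearMap.mem_ker, Matrix.mulVecLin_apply] at hx ⊢
    rw [Matrix.mulVec_mulVec, h, ← Matrix.mulVec_mulVec, hx, Matrix.mulVec_zero]
  have : Nontrivial (LinearMap.ker P.mulVecLin) :=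
    ⟨⟨⟨u, hPu⟩, 0, fun e => hu (congrArg Subtype.val e)⟩⟩
  obtain ⟨μ, hμ⟩ := Module.End.exists_eigenvalue (Q.mulVecLin.restrict hinv)
  obtain ⟨w, hw⟩ := hμ.exists_hasEigenvector
  exact ⟨μ, w, fun e => hw.2 (Subtype.ext e), w.2, congrArg Subtype.val hw.apply_eq_smul⟩

lemma PrimeSpectrum.exists_ltSeries_mem_head {R : Type*} [CommRing R] [IsNoetherianRing R]
    {r : R} (hr : r ∈ Ring.jacobson R) {n : ℕ} (hn : (n + 1 : ℕ) ≤ ringKrullDim R) :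
    ∃ l : LTSeries (PrimeSpectrum R), l.length = n ∧ r ∈ l.head.asIdeal := by
  have h1 := ringKrullDim_le_ringKrullDim_quotient_add_encard {r} (by simpa using hr)
  have h2 : (n : WithBot ℕ∞) ≤ ringKrullDim (R ⧸ Ideal.span {r}) := by
    have := hn.trans h1
    simp only [Nat.cast_add, Nat.cast_one, Set.encard_singleton] at this
    exact (ENat.WithBot.add_le_add_one_right_iff).mp (by exact_mod_cast this)
  rw [ringKrullDim_quotient, Order.le_krullDim_iff] at h2
  obtain ⟨l, hl⟩ := h2
  refine ⟨l.map Subtype.val fun _ _ h => h, hl, ?_⟩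
  change r ∈ l.head.1.asIdeal
  simpa using l.head.2

lemma Ideal.height_head_le_of_ringKrullDim_le {R : Type*} [CommRing R] {n k : ℕ}
    (h : ringKrullDim R ≤ (n + k : ℕ)) (l : LTSeries (PrimeSpectrum R)) (hl : l.length = n) :
    Order.height l.head ≤ k := by
  have : Nonempty (PrimeSpectrum R) := ⟨l.head⟩
  rw [ringKrullDim, Order.krullDim_eq_iSup_height_add_coheight_of_nonempty] at h
  have h1 : Order.height l.head + Order.coheight l.head ≤ (n + k : ℕ) :=
    (le_iSup (fun a => Order.height a + Order.coheight a) l.head).trans (by exact_mod_cast h)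
  have h2 : (n : ℕ∞) ≤ Order.coheight l.head := hl ▸ Order.length_le_coheight_head
  have h3 : Order.height l.head + n ≤ k + n := by
    calc _ ≤ Order.height l.head + Order.coheight l.head := by gcongr
      _ ≤ _ := h1
      _ = _ := by push_cast; ring
  exact (ENat.add_le_add_iff_right (ENat.natCast_ne_top n)).mp h3

open IsLocalRing in
/-- If `P`, `Q` are matrices over the maximal ideal of a Noetherian local ring and `P Q = K P`,
then some prime of height at most two contains all maximal minors of `P` stacked on `Q`. -/
lemma exists_prime_height_le_two_of_mul_eq_mul {R ι : Type*} [CommRing R] [IsLocalRing R]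
    [IsNoetherianRing R] [Fintype ι] [DecidableEq ι] [Nonempty ι] {P Q K : Matrix ι ι R}
    (hP : ∀ i j, P i j ∈ maximalIdeal R) (hQ : ∀ i j, Q i j ∈ maximalIdeal R)
    (h : P * Q = K * P) :
    ∃ q : PrimeSpectrum R, Order.height q ≤ 2 ∧
      ∀ f : ι → ι ⊕ ι, ((fromRows P Q).submatrix f id).det ∈ q.asIdeal := by
  have hdet {M : Matrix ι ι R} (hM : ∀ i j, M i j ∈ maximalIdeal R) :
      M.det ∈ maximalIdeal R := by
    rw [← residue_eq_zero_iff, RingHom.map_det]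
    have : (residue R).mapMatrix M = 0 := by
      ext i j
      exact (residue_eq_zero_iff _).mpr (hM i j)
    rw [this, Matrix.det_zero]
  have hrows (f : ι → ι ⊕ ι) (i j : ι) :
      (fromRows P Q).submatrix f id i j ∈ maximalIdeal R := by
    rcases hf : f i with k | k
    · simpa [hf] using hP k j
    · simpa [hf] using hQ k j
  obtain ⟨d, hd⟩ : ∃ d : ℕ, ringKrullDim R = d := by
    rw [← maximalIdeal_height_eq_ringKrullDim]
    exact ⟨_, congrArg _ (ENat.natCast_toNat (Ideal.height_ne_top_of_isPrime)).symm⟩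
  rcases le_total d 2 with hd2 | hd2
  · refine ⟨closedPoint R, ?_, fun f => hdet (hrows f)⟩
    have := Order.height_le_krullDim (closedPoint R)
    rw [← ringKrullDim, hd] at this
    have : Order.height (closedPoint R) ≤ d := by exact_mod_cast this
    exact this.trans (by exact_mod_cast hd2)
  obtain ⟨e, rfl⟩ := Nat.exists_eq_add_of_le' hd2
  obtain ⟨l, hl, hlP⟩ := PrimeSpectrum.exists_ltSeries_mem_head (n := e + 1)
    (show P.det ∈ Ring.jacobson R by
      rw [IsLocalRing.ringJacobson_eq_maximalIdeal]; exact hdet hP) hd.ge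
  let p := l.head.asIdeal
  let L := AlgebraicClosure p.ResidueField
  have hker : RingHom.ker (algebraMap R L) = p := by
    rw [IsScalarTower.algebraMap_eq R p.ResidueField L,
      RingHom.ker_comp_of_injective _ (algebraMap p.ResidueField L).injective,
      Ideal.ker_algebraMap_residueField]
  let φ := algebraMap R L
  have hφ : φ.mapMatrix P * φ.mapMatrix Q = φ.mapMatrix K * φ.mapMatrix P := by
    rw [← map_mul, h, map_mul]
  obtain ⟨μ, w, hw, hPw, hQw⟩ := exists_eigenvector_of_mul_eq_mul hφ
    (by rw [← RingHom.map_det, ← RingHom.mem_ker, hker]; exact hlP)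
  have hroot : (scalar ι μ - φ.mapMatrix Q).det = 0 := by
    refine exists_mulVec_eq_zero_iff.mp ⟨w, hw, ?_⟩
    rw [sub_mulVec, hQw]
    ext i
    simp [scalar_apply]
  have hint : IsIntegral R μ := by
    refine ⟨Q.charpoly, Q.charpoly_monic, ?_⟩
    rw [← Polynomial.eval_map, ← charpoly_map, eval_charpoly]
    exact hroot
  let S := Algebra.adjoin R {μ}
  have : Algebra.IsIntegral R S := Algebra.IsIntegral.adjoin (by simpa)
  have : Module.Finite R S :=
    Module.Finite.iff_fg.mpr hint.fg_adjoin_singleton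
  have : IsNoetherianRing S := IsNoetherianRing.of_finite R S
  let x : S := ⟨μ, Algebra.self_mem_adjoin_singleton R μ⟩
  have hxroot : (scalar ι x - (algebraMap R S).mapMatrix Q).det = 0 := by
    refine (map_eq_zero_iff S.val Subtype.val_injective).mp ?_
    rw [AlgHom.map_det, ← hroot]
    congr 1
    ext i j
    by_cases hij : i = j <;> simp [scalar_apply, hij, φ, x]
  have hx : x ∈ Ring.jacobson S := by
    rw [Ring.jacobson_eq_sInf_isMaximal, Ideal.mem_sInf]
    intro M hM
    have : M.IsMaximal := hM
    have hMR : M.comap (algebraMap R S) = maximalIdeal R :=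
      eq_maximalIdeal (Ideal.isMaximal_comap_of_isIntegral_of_isMaximal M)
    have hpow : Ideal.Quotient.mk M x ^ Fintype.card ι = 0 := by
      have := congrArg (Ideal.Quotient.mk M) hxroot
      rw [RingHom.map_det, map_zero] at this
      rw [← this, ← Finset.card_univ, ← Finset.prod_const, ← det_diagonal]
      congr 1
      ext i j
      have hQM : Ideal.Quotient.mk M (algebraMap R S (Q i j)) = 0 := by
        rw [Ideal.Quotient.eq_zero_iff_mem, ← Ideal.mem_comap, hMR]
        exact hQ i j
      by_cases hij : i = j
      · subst hij; simp [scalar_apply, hQM]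
      · simp [scalar_apply, hij, hQM]
    exact Ideal.Quotient.eq_zero_iff_mem.mp ((pow_eq_zero_iff Fintype.card_ne_zero).mp hpow)
  have hlies : (⊥ : Ideal S).LiesOver l.head.asIdeal := by
    constructor
    ext r
    rw [Ideal.under_def, Ideal.mem_comap, Ideal.mem_bot, ← (show _ = l.head.asIdeal from hker),
      RingHom.mem_ker, IsScalarTower.algebraMap_apply R S L]
    exact map_eq_zero_iff (algebraMap S L) Subtype.val_injective
  obtain ⟨l', hl', -⟩ := Ideal.exists_ltSeries_of_hasGoingUp l (⊥ : Ideal S)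
  obtain ⟨l₂, hl₂, hxl₂⟩ := PrimeSpectrum.exists_ltSeries_mem_head (n := e) hx
    (Order.le_krullDim_iff.mpr ⟨l', hl'.trans hl⟩)
  have hmono : StrictMono (PrimeSpectrum.comap (algebraMap R S)) := fun a b hab =>
    Ideal.IsIntegral.comap_lt_comap (R := R) hab
  refine ⟨(l₂.map _ hmono).head, Ideal.height_head_le_of_ringKrullDim_le
    (hd.le.trans (by norm_cast)) (l₂.map _ hmono) hl₂, fun f => ?_⟩
  change algebraMap R S _ ∈ l₂.head.asIdeal
  obtain ⟨V, hV⟩ := exists_valuationSubring_center_eq (algebraMap S L) Subtype.val_injective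
    l₂.head.asIdeal
  rw [← (hV _).2, ← IsScalarTower.algebraMap_apply, RingHom.map_det]
  refine V.valuation.map_det_lt_one_of_mulVec _ (fun i j => ?_) w hw μ ((hV x).2.mpr hxl₂)
    fun i => ?_
  · have := (hV (algebraMap R S ((fromRows P Q).submatrix f id i j))).1
    rwa [← IsScalarTower.algebraMap_apply] at this
  · rcases hf : f i with k | k
    · refine ⟨k, ?_⟩
      have hrow : (φ.mapMatrix ((fromRows P Q).submatrix f id) *ᵥ w) i =
          (φ.mapMatrix P *ᵥ w) k := by
        simp [mulVec, dotProduct, hf]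
      rw [hrow, hPw]
      simp
    · refine ⟨k, ?_⟩
      have hrow : (φ.mapMatrix ((fromRows P Q).submatrix f id) *ᵥ w) i =
          (φ.mapMatrix Q *ᵥ w) k := by
        simp [mulVec, dotProduct, hf]
      rw [hrow, hQw]
      simp

/-- The block matrix obtained by stacking the `m × m` matrix `P` on top of the
`m × m` matrix `Q`, as a `(2m) × m` matrix. -/
def stack {R : Type*} {m : ℕ} (P Q : Matrix (Fin m) (Fin m) R) :
    Matrix (Fin (2 * m)) (Fin m) R :=
  Matrix.of fun i j => if h : (i : ℕ) < m then P ⟨i, h⟩ j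
    else Q ⟨(i : ℕ) - m, by omega⟩ j

/-- If `P`, `Q`, `K` are `m × m` matrices (`m ≥ 2`) of homogeneous polynomials
(each matrix of a common positive degree) over `ℂ[x₁,…,xₙ]` with `P·Q = K·P`
(the symbol form of the symmetry condition), then the characteristic variety of
the joint system, i.e. the zero locus of the maximal minors of the stacked
`(2m) × m` matrix `[P; Q]`, has codimension at most `m`: the ideal of its
maximal minors has height at most `m`. -/
theorem height_maximalMinors_symmetry_le (n m : ℕ) (hn : 1 ≤ n) (hm : 2 ≤ m)
    (P Q K : Matrix (Fin m) (Fin m) (MvPolynomial (Fin n) ℂ))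
    (a b : ℕ) (ha : 0 < a) (hb : 0 < b)
    (hP : ∀ i j, (P i j).IsHomogeneous a) (hQ : ∀ i j, (Q i j).IsHomogeneous b)
    (hsym : P * Q = K * P) :
    idealHeight (maximalMinorsIdeal (stack P Q)) ≤ (m : ℕ∞) := by
  have : NeZero m := ⟨by omega⟩
  let ε : MvPolynomial (Fin n) ℂ →+* ℂ := MvPolynomial.constantCoeff
  let 𝔪 := RingHom.ker ε
  have hprime : 𝔪.IsPrime := RingHom.ker_isPrime ε
  let R := Localization.AtPrime 𝔪
  let φ := algebraMap (MvPolynomial (Fin n) ℂ) R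
  have hmem {p : MvPolynomial (Fin n) ℂ} {d : ℕ} (hd : 0 < d) (hp : p.IsHomogeneous d) :
      φ p ∈ IsLocalRing.maximalIdeal R := by
    rw [IsLocalization.AtPrime.to_map_mem_maximal_iff R 𝔪]
    exact hp.coeff_eq_zero (by simpa using hd.ne)
  have hφ : φ.mapMatrix P * φ.mapMatrix Q = φ.mapMatrix K * φ.mapMatrix P := by
    rw [← map_mul, hsym, map_mul]
  obtain ⟨q, hq, hqI⟩ := exists_prime_height_le_two_of_mul_eq_mul
    (P := φ.mapMatrix P) (Q := φ.mapMatrix Q)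
    (fun i j => hmem ha (hP i j)) (fun i j => hmem hb (hQ i j)) hφ
  have hle : maximalMinorsIdeal (stack P Q) ≤ (PrimeSpectrum.comap φ q).asIdeal := by
    rw [maximalMinorsIdeal, Ideal.span_le]
    rintro _ ⟨f, -, rfl⟩
    let g : Fin (2 * m) → Fin m ⊕ Fin m := fun i =>
      if h : (i : ℕ) < m then Sum.inl ⟨i, h⟩ else Sum.inr ⟨(i : ℕ) - m, by omega⟩
    have := hqI (g ∘ f)
    change φ _ ∈ q.asIdeal
    rw [RingHom.map_det]
    convert this using 2
    ext i j
    by_cases h : (f i : ℕ) < m <;> simp [stack, g, h]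
  calc idealHeight (maximalMinorsIdeal (stack P Q))
      ≤ Order.height (PrimeSpectrum.comap φ q) := by
        unfold idealHeight
        exact iInf₂_le (PrimeSpectrum.comap φ q) hle
    _ = Order.height q := by
      rw [← PrimeSpectrum.height_eq_orderHeight, ← PrimeSpectrum.height_eq_orderHeight]
      exact IsLocalization.height_under 𝔪.primeCompl q.asIdeal
    _ ≤ 2 := hq
    _ ≤ m := by exact_mod_cast hm
end
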